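/- Let f : ℕ → ℤ be a multiplicative function taking values in {-1, 1} such that f(2^k) = 1 for some integer k ≥ 1, and let c ∈ (0, 1] be a real number. Suppose ∑_{p ≤ x} f(p) = c·(x/log x)·(1 + o(1)) as x → ∞, the sum running over primes p. Then the partial sums of f are unbounded: lim sup_{N→∞} |∑_{n=1}^{N} f(n)| = ∞. -/

import Mathlib

open Filter Asymptotics

/-!
Suppose the partial sums of `f` are at most `C`. By Abel summation `∑ f(n) n⁻ˢ ≤ C` for all `s > 1`.
The Euler product bounds the same series below by a constant times `exp (∑_{p < N} f(p) p⁻ˢ)`,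
uniformly in `1 < s ≤ 2`: an Euler factor at an odd prime is `exp (f(p) p⁻ˢ + O(p⁻²))`, and the
factor at `2`, the only one which could be close to zero, is kept away from it by `f(2ᵏ) ≠ -1`.
Letting `s → 1` bounds `∑_{p < N} f(p) / p`, whereas these sums tend to infinity when `f` has a
positive mean value over the primes.
-/

section AbelSummation

lemma sum_Ico_mul_le_of_antitoneOn {d w : ℕ → ℝ} {m : ℕ} {C : ℝ} (hw : AntitoneOn w (Set.Ici m))
    (hw0 : ∀ i ≥ m, 0 ≤ w i) (hd : ∀ n ≥ m, ∑ i ∈ Finset.Ico m n, d i ≤ C) {n : ℕ} (hmn : m ≤ n) :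
    ∑ i ∈ Finset.Ico m n, d i * w i ≤ C * w m := by
  have hparts : ∑ i ∈ Finset.Ico m n, d i * w i
      ≤ w n * ∑ i ∈ Finset.Ico m n, d i + C * (w m - w n) := by
    induction n, hmn using Nat.le_induction with
    | base => simp
    | succ n hmn ih =>
      have hstep : 0 ≤ w n - w (n + 1) :=
        sub_nonneg.2 (hw hmn (Set.mem_Ici.2 (hmn.trans n.le_succ)) n.le_succ)
      have hle := mul_le_mul_of_nonneg_left (hd (n + 1) (hmn.trans n.le_succ)) hstep
      rw [Finset.sum_Ico_succ_top hmn] at hle ⊢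
      rw [Finset.sum_Ico_succ_top hmn]
      linarith
  linarith [mul_le_mul_of_nonneg_left (hd n hmn) (hw0 n hmn)]

lemma sum_primesBelow_sub_sum_primesBelow (g : ℕ → ℝ) {m n : ℕ} (hmn : m ≤ n) :
    ∑ p ∈ Nat.primesBelow n, g p - ∑ p ∈ Nat.primesBelow m, g p
      = ∑ i ∈ Finset.Ico m n, if i.Prime then g i else 0 := by
  rw [Nat.primesBelow, Nat.primesBelow, Finset.sum_filter, Finset.sum_filter,
    Finset.sum_Ico_eq_sub _ hmn]

lemma le_sum_primesBelow_mul_sub_of_antitoneOn {d w : ℕ → ℝ} {m : ℕ} {L : ℝ}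
    (hw : AntitoneOn w (Set.Ici m)) (hw0 : ∀ i ≥ m, 0 ≤ w i)
    (hd : ∀ n ≥ m, L ≤ ∑ p ∈ Nat.primesBelow n, d p - ∑ p ∈ Nat.primesBelow m, d p)
    {n : ℕ} (hmn : m ≤ n) :
    L * w m ≤ ∑ p ∈ Nat.primesBelow n, d p * w p - ∑ p ∈ Nat.primesBelow m, d p * w p := by
  have habel := sum_Ico_mul_le_of_antitoneOn (d := fun i ↦ -if i.Prime then d i else 0) (C := -L)
    hw hw0 (fun n hn ↦ by
      rw [Finset.sum_neg_distrib, ← sum_primesBelow_sub_sum_primesBelow d hn]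
      exact neg_le_neg (hd n hn)) hmn
  rw [sum_primesBelow_sub_sum_primesBelow (fun p ↦ d p * w p) hmn]
  simpa only [neg_mul, ite_mul, zero_mul, Finset.sum_neg_distrib, neg_le_neg_iff] using habel

lemma antitoneOn_natCast_rpow_neg {s : ℝ} (hs : 0 ≤ s) :
    AntitoneOn (fun n : ℕ ↦ (n : ℝ) ^ (-s)) (Set.Ici 1) := fun _ hm _ _ hmn ↦
  Real.rpow_le_rpow_of_nonpos (Nat.cast_pos.2 hm) (Nat.cast_le.2 hmn) (neg_nonpos.2 hs)

end AbelSummation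

section DirichletSeries

lemma summable_norm_mul_rpow_neg {f : ℕ → ℝ} (hf : ∀ n ≠ 0, |f n| ≤ 1) {s : ℝ} (hs : 1 < s) :
    Summable fun n : ℕ ↦ ‖f n * (n : ℝ) ^ (-s)‖ := by
  refine .of_nonneg_of_le (fun _ ↦ norm_nonneg _) (fun n ↦ ?_)
    (Real.summable_nat_rpow.2 (neg_lt_neg hs))
  obtain rfl | hn := eq_or_ne n 0
  · simp [Real.zero_rpow (neg_ne_zero.2 (zero_lt_one.trans hs).ne')]
  · rw [norm_mul, Real.norm_eq_abs, Real.norm_of_nonneg (by positivity)]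
    exact mul_le_of_le_one_left (by positivity) (hf n hn)

lemma tsum_mul_rpow_neg_le {f : ℕ → ℝ} {C s : ℝ} (hC : ∀ N, ∑ n ∈ Finset.Icc 1 N, f n ≤ C)
    (hs : 0 < s) (hsum : Summable fun n : ℕ ↦ f n * (n : ℝ) ^ (-s)) :
    ∑' n : ℕ, f n * (n : ℝ) ^ (-s) ≤ C := by
  have hpartial (n : ℕ) : ∑ i ∈ Finset.Ico 1 n, f i ≤ C := by
    cases n with
    | zero => simpa using hC 0
    | succ n => exact hC n
  refine le_of_tendsto hsum.tendsto_sum_tsum_nat ?_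
  filter_upwards [eventually_ge_atTop 1] with n hn
  rw [Finset.range_eq_Ico, Finset.sum_eq_sum_Ico_succ_bot hn]
  simpa [Real.zero_rpow (neg_ne_zero.2 hs.ne')] using
    sum_Ico_mul_le_of_antitoneOn (antitoneOn_natCast_rpow_neg hs.le) (fun i _ ↦ by positivity)
      (fun n _ ↦ hpartial n) hn

lemma tendsto_prod_primesBelow_tsum_mul_pow {f : ℕ → ℝ} (hf1 : f 1 = 1)
    (hfmul : ∀ a b : ℕ, a.Coprime b → f (a * b) = f a * f b) (hf : ∀ n ≠ 0, |f n| ≤ 1)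
    {s : ℝ} (hs : 1 < s) :
    Tendsto (fun n ↦ ∏ p ∈ Nat.primesBelow n, ∑' e : ℕ, f (p ^ e) * ((p : ℝ) ^ (-s)) ^ e) atTop
      (nhds (∑' n : ℕ, f n * (n : ℝ) ^ (-s))) := by
  have hpow (p e : ℕ) : ((p ^ e : ℕ) : ℝ) ^ (-s) = ((p : ℝ) ^ (-s)) ^ e := by
    rw [Nat.cast_pow, Real.rpow_pow_comm p.cast_nonneg]
  have heuler := EulerProduct.eulerProduct (f := fun n : ℕ ↦ f n * (n : ℝ) ^ (-s)) (by simp [hf1])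
    (fun {a b} hab ↦ by
      rw [hfmul a b hab, Nat.cast_mul, Real.mul_rpow a.cast_nonneg b.cast_nonneg, mul_mul_mul_comm])
    (summable_norm_mul_rpow_neg hf hs)
    (by simp [Real.zero_rpow (neg_ne_zero.2 (zero_lt_one.trans hs).ne')])
  simpa only [hpow] using heuler

end DirichletSeries

section EulerFactor

variable {a : ℕ → ℝ} {u : ℝ}

lemma sum_one_add_mul_pow_le_tsum_add (ha : ∀ e, |a e| ≤ 1) (hu0 : 0 ≤ u) (hu1 : u < 1)
    (S : Finset ℕ) : ∑ e ∈ S, (1 + a e) * u ^ e ≤ ∑' e, a e * u ^ e + (1 - u)⁻¹ := by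
  have hgeom : Summable fun e : ℕ ↦ u ^ e := summable_geometric_of_lt_one hu0 hu1
  have hsum : Summable fun e ↦ a e * u ^ e := .of_norm_bounded hgeom fun e ↦ by
    rw [norm_mul, Real.norm_eq_abs, Real.norm_of_nonneg (by positivity)]
    exact mul_le_of_le_one_left (by positivity) (ha e)
  have hsplit (e : ℕ) : (1 + a e) * u ^ e = a e * u ^ e + u ^ e := by ring
  rw [← tsum_geometric_of_lt_one hu0 hu1, ← hsum.tsum_add hgeom]
  simp only [← hsplit]
  refine Summable.sum_le_tsum S (fun e _ ↦ ?_) (by simpa only [hsplit] using hsum.add hgeom)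
  exact mul_nonneg (by linarith [(abs_le.1 (ha e)).1]) (by positivity)

lemma one_add_mul_pow_le_tsum (ha : ∀ e, |a e| ≤ 1) (ha0 : a 0 = 1) (hu0 : 0 ≤ u)
    (hu : u ≤ 1 / 2) {k : ℕ} (hk : 1 ≤ k) : (1 + a k) * u ^ k ≤ ∑' e, a e * u ^ e := by
  have hpair := sum_one_add_mul_pow_le_tsum_add ha hu0 (by linarith) {0, k}
  rw [Finset.sum_pair (by lia), ha0, pow_zero] at hpair
  have hinv : (1 - u)⁻¹ ≤ 2 := inv_le_of_inv_le₀ two_pos (by linarith)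
  linarith

lemma one_add_sub_sq_le_tsum (ha : ∀ e, |a e| ≤ 1) (ha0 : a 0 = 1) (hu0 : 0 ≤ u)
    (hu : u ≤ 1 / 3) : 1 + (a 1 * u - 3 / 2 * u ^ 2) ≤ ∑' e, a e * u ^ e := by
  have htwo := sum_one_add_mul_pow_le_tsum_add ha hu0 (by linarith) (Finset.range 2)
  rw [Finset.sum_range_succ, Finset.sum_range_one, ha0, pow_zero, pow_one] at htwo
  have hinv : (1 - u)⁻¹ ≤ 1 + u + 3 / 2 * u ^ 2 := by
    rw [inv_le_iff_one_le_mul₀ (by linarith)]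
    nlinarith [mul_nonneg (sq_nonneg u) (sub_nonneg.2 hu)]
  linarith

lemma exp_sub_two_mul_sq_le_one_add {v : ℝ} (hv : -(1 / 2) ≤ v) :
    Real.exp (v - 2 * v ^ 2) ≤ 1 + v := by
  have hpos : 0 < 1 + v := by linarith
  rw [← Real.le_log_iff_exp_le hpos]
  refine le_trans ?_ (Real.one_sub_inv_le_log_of_pos hpos)
  rw [le_sub_comm, inv_le_iff_one_le_mul₀ hpos]
  nlinarith [mul_nonneg (sq_nonneg v) (by linarith : 0 ≤ 1 + 2 * v)]

lemma exp_mul_sub_le_tsum (ha : ∀ e, |a e| ≤ 1) (ha0 : a 0 = 1) (hu0 : 0 ≤ u)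
    (hu : u ≤ 1 / 3) : Real.exp (a 1 * u - 6 * u ^ 2) ≤ ∑' e, a e * u ^ e := by
  set v := a 1 * u - 3 / 2 * u ^ 2 with hv
  have ht : |a 1 * u| ≤ u := by
    rw [abs_mul, abs_of_nonneg hu0]
    exact mul_le_of_le_one_left hu0 (ha 1)
  have hsq : 3 / 2 * u ^ 2 ≤ 1 / 2 * u := by nlinarith
  have hv_le : |v| ≤ 3 / 2 * u := by
    rw [abs_le] at ht ⊢
    constructor <;> nlinarith
  have hv_sq : v ^ 2 ≤ 9 / 4 * u ^ 2 :=
    (sq_le_sq' (abs_le.1 hv_le).1 (abs_le.1 hv_le).2).trans_eq (by ring)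
  calc Real.exp (a 1 * u - 6 * u ^ 2)
      ≤ Real.exp (v - 2 * v ^ 2) := Real.exp_le_exp.2 (by linarith)
    _ ≤ 1 + v := exp_sub_two_mul_sq_le_one_add (by linarith [(abs_le.1 hv_le).1])
    _ ≤ ∑' e, a e * u ^ e := one_add_sub_sq_le_tsum ha ha0 hu0 hu

end EulerFactor

section EulerProduct

variable {f : ℕ → ℝ}

lemma exists_exp_sub_le_eulerFactor_two (hf1 : f 1 = 1) (hf : ∀ n ≠ 0, |f n| ≤ 1)
    (hf2 : ∃ k, 1 ≤ k ∧ f (2 ^ k) ≠ -1) :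
    ∃ A : ℝ, ∀ u ∈ Set.Icc (1 / 4 : ℝ) (1 / 2),
      Real.exp (f 2 * u - A) ≤ ∑' e : ℕ, f (2 ^ e) * u ^ e := by
  obtain ⟨k, hk, hfk⟩ := hf2
  have hpos : 0 < 1 + f (2 ^ k) := by
    have := (abs_le.1 (hf (2 ^ k) (by positivity))).1.lt_of_ne' hfk
    linarith
  refine ⟨1 - Real.log ((1 + f (2 ^ k)) * (1 / 4) ^ k), fun u ⟨hu4, hu2⟩ ↦ ?_⟩
  have hfu : f 2 * u ≤ 1 := by nlinarith [(abs_le.1 (hf 2 two_ne_zero)).2]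
  calc Real.exp (f 2 * u - (1 - Real.log ((1 + f (2 ^ k)) * (1 / 4) ^ k)))
      ≤ Real.exp (Real.log ((1 + f (2 ^ k)) * (1 / 4) ^ k)) := Real.exp_le_exp.2 (by linarith)
    _ = (1 + f (2 ^ k)) * (1 / 4) ^ k := Real.exp_log (by positivity)
    _ ≤ (1 + f (2 ^ k)) * u ^ k := by gcongr
    _ ≤ ∑' e : ℕ, f (2 ^ e) * u ^ e :=
      one_add_mul_pow_le_tsum (a := fun e ↦ f (2 ^ e)) (fun e ↦ hf _ (by positivity))
        (by simpa using hf1) (by linarith) hu2 hk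

lemma exp_sub_le_eulerFactor_of_three_le (hf1 : f 1 = 1) (hf : ∀ n ≠ 0, |f n| ≤ 1) {p : ℕ}
    (hp : 3 ≤ p) {s : ℝ} (hs : 1 ≤ s) :
    Real.exp (f p * (p : ℝ) ^ (-s) - 6 * (1 / (p : ℝ) ^ 2))
      ≤ ∑' e : ℕ, f (p ^ e) * ((p : ℝ) ^ (-s)) ^ e := by
  have hp3 : (3 : ℝ) ≤ p := by exact_mod_cast hp
  set u := (p : ℝ) ^ (-s)
  have hu0 : 0 ≤ u := by positivity
  have hup : u ≤ 1 / p := by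
    rw [one_div, ← Real.rpow_neg_one]
    exact Real.rpow_le_rpow_of_exponent_le (by linarith) (neg_le_neg hs)
  have hu_sq : u ^ 2 ≤ 1 / (p : ℝ) ^ 2 := by
    rw [← one_div_pow]
    gcongr
  have hu3 : u ≤ 1 / 3 := hup.trans (one_div_le_one_div_of_le three_pos hp3)
  have hfactor := exp_mul_sub_le_tsum (a := fun e ↦ f (p ^ e))
    (fun e ↦ hf _ (pow_ne_zero e (by lia))) (by simpa using hf1) hu0 hu3
  rw [pow_one] at hfactor
  exact (Real.exp_le_exp.2 (by linarith)).trans hfactor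

lemma exists_summable_exp_sub_le_eulerFactor (hf1 : f 1 = 1) (hf : ∀ n ≠ 0, |f n| ≤ 1)
    (hf2 : ∃ k, 1 ≤ k ∧ f (2 ^ k) ≠ -1) :
    ∃ b : ℕ → ℝ, Summable b ∧ ∀ s ∈ Set.Icc (1 : ℝ) 2, ∀ p : ℕ, p.Prime →
      Real.exp (f p * (p : ℝ) ^ (-s) - b p) ≤ ∑' e : ℕ, f (p ^ e) * ((p : ℝ) ^ (-s)) ^ e := by
  obtain ⟨A, hA⟩ := exists_exp_sub_le_eulerFactor_two hf1 hf hf2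
  refine ⟨Function.update (fun p : ℕ ↦ 6 * (1 / (p : ℝ) ^ 2)) 2 A,
    ((Real.summable_one_div_nat_pow.2 one_lt_two).mul_left 6).update 2 A, fun s hs p hp ↦ ?_⟩
  obtain rfl | hp2 := eq_or_ne p 2
  · have hmem : (2 : ℝ) ^ (-s) ∈ Set.Icc (1 / 4 : ℝ) (1 / 2) := by
      have hlo := Real.rpow_le_rpow_of_exponent_le one_le_two (neg_le_neg hs.2)
      have hhi := Real.rpow_le_rpow_of_exponent_le one_le_two (neg_le_neg hs.1)
      norm_num [Real.rpow_neg] at hlo hhi ⊢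
      exact ⟨hlo, hhi⟩
    simpa using hA _ hmem
  · rw [Function.update_of_ne hp2]
    exact exp_sub_le_eulerFactor_of_three_le hf1 hf (hp.two_le.lt_of_ne' hp2) hs.1

lemma exists_exp_sum_sub_le_prod_eulerFactor (hf1 : f 1 = 1) (hf : ∀ n ≠ 0, |f n| ≤ 1)
    (hf2 : ∃ k, 1 ≤ k ∧ f (2 ^ k) ≠ -1) :
    ∃ B : ℝ, ∀ s ∈ Set.Icc (1 : ℝ) 2, ∀ n : ℕ,
      Real.exp (∑ p ∈ Nat.primesBelow n, f p * (p : ℝ) ^ (-s) - B)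
        ≤ ∏ p ∈ Nat.primesBelow n, ∑' e : ℕ, f (p ^ e) * ((p : ℝ) ^ (-s)) ^ e := by
  obtain ⟨b, hb, hfactor⟩ := exists_summable_exp_sub_le_eulerFactor hf1 hf hf2
  refine ⟨∑' p, |b p|, fun s hs n ↦ ?_⟩
  have hbsum : ∑ p ∈ Nat.primesBelow n, b p ≤ ∑' p, |b p| :=
    (Finset.sum_le_sum fun p _ ↦ le_abs_self (b p)).trans
      (hb.abs.sum_le_tsum _ fun p _ ↦ abs_nonneg (b p))
  calc Real.exp (∑ p ∈ Nat.primesBelow n, f p * (p : ℝ) ^ (-s) - ∑' p, |b p|)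
      ≤ Real.exp (∑ p ∈ Nat.primesBelow n, (f p * (p : ℝ) ^ (-s) - b p)) := by
        rw [Finset.sum_sub_distrib]
        gcongr
    _ = ∏ p ∈ Nat.primesBelow n, Real.exp (f p * (p : ℝ) ^ (-s) - b p) := Real.exp_sum _ _
    _ ≤ _ := Finset.prod_le_prod (fun p _ ↦ (Real.exp_pos _).le)
        fun p hp ↦ hfactor s hs p (Nat.prime_of_mem_primesBelow hp)

end EulerProduct

section PrimeSums

lemma tendsto_sum_primesBelow_one_div_atTop :
    Tendsto (fun n ↦ ∑ p ∈ Nat.primesBelow n, 1 / (p : ℝ)) atTop atTop := by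
  have hdiv := (not_summable_iff_tendsto_nat_atTop_of_nonneg
    (Set.indicator_nonneg fun _ _ ↦ by positivity)).1 not_summable_one_div_on_primes
  refine hdiv.congr fun n ↦ ?_
  simp only [Nat.primesBelow, Finset.sum_filter, Set.indicator_apply, Set.mem_ofPred_eq]

variable {f : ℕ → ℝ} {c : ℝ}

lemma eventually_nonneg_sum_primesBelow_sub (hc : 0 < c)
    (hasymp : (fun x : ℝ ↦ (∑ p ∈ Nat.primesBelow (⌊x⌋₊ + 1), f p) - c * (x / Real.log x))
      =o[atTop] fun x : ℝ ↦ x / Real.log x) :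
    ∃ ε > 0, ∀ᶠ n in atTop, 0 ≤ ∑ p ∈ Nat.primesBelow n, (f p - ε) := by
  set B := Real.log 4 + 1
  have hB : 0 < B := add_pos (Real.log_pos (by norm_num)) one_pos
  refine ⟨c / 2 / B, by positivity, ?_⟩
  have hreal : ∀ᶠ x : ℝ in atTop,
      0 ≤ ∑ p ∈ Nat.primesBelow (⌊x⌋₊ + 1), (f p - c / 2 / B) := by
    filter_upwards [Chebyshev.eventually_primeCounting_le one_pos, hasymp.bound (half_pos hc),
      eventually_ge_atTop 2] with x hcheb hbound hx
    have hx0 : 0 ≤ x / Real.log x := div_nonneg (by linarith) (Real.log_nonneg (by linarith))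
    rw [Real.norm_of_nonneg hx0, Real.norm_eq_abs] at hbound
    have hlower : c / 2 * (x / Real.log x) ≤ ∑ p ∈ Nat.primesBelow (⌊x⌋₊ + 1), f p := by
      linarith [(abs_le.1 hbound).1]
    have hcard : (Nat.primeCounting' (⌊x⌋₊ + 1) : ℝ) * (c / 2 / B) ≤ c / 2 * (x / Real.log x) :=
      calc (Nat.primeCounting' (⌊x⌋₊ + 1) : ℝ) * (c / 2 / B)
          ≤ B * x / Real.log x * (c / 2 / B) := mul_le_mul_of_nonneg_right hcheb (by positivity)
        _ = c / 2 * (x / Real.log x) := by field_simp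
    rw [Finset.sum_sub_distrib, Finset.sum_const, Nat.primesBelow_card_eq_primeCounting',
      nsmul_eq_mul]
    linarith
  rw [← map_add_atTop_eq_nat 1, eventually_map]
  simpa only [Nat.floor_natCast] using tendsto_natCast_atTop_atTop.eventually hreal

lemma tendsto_sum_primesBelow_div_of_eventually_nonneg {ε : ℝ} (hε : 0 < ε)
    (hf : ∀ᶠ n in atTop, 0 ≤ ∑ p ∈ Nat.primesBelow n, (f p - ε)) :
    Tendsto (fun n ↦ ∑ p ∈ Nat.primesBelow n, f p / p) atTop atTop := by
  obtain ⟨L, hL⟩ := (isBoundedUnder_of_eventually_ge hf).bddBelow_range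
  have habel {n : ℕ} (hn : 1 ≤ n) :
      L + ε * ∑ p ∈ Nat.primesBelow n, 1 / (p : ℝ) ≤ ∑ p ∈ Nat.primesBelow n, f p / p := by
    have hprimes_one : Nat.primesBelow 1 = ∅ := rfl
    have hle := le_sum_primesBelow_mul_sub_of_antitoneOn (d := fun p ↦ f p - ε) (L := L)
      (antitoneOn_natCast_rpow_neg zero_le_one) (fun i _ ↦ by positivity)
      (fun n _ ↦ by simpa [hprimes_one] using hL (Set.mem_range_self n)) hn
    simp only [hprimes_one, Finset.sum_empty, Real.rpow_neg_one, Nat.cast_one, inv_one, mul_one,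
      sub_mul, Finset.sum_sub_distrib, ← Finset.mul_sum] at hle
    simp only [div_eq_mul_inv, one_mul]
    linarith
  refine tendsto_atTop_mono' _ ((eventually_ge_atTop 1).mono fun n hn ↦ habel hn) ?_
  exact tendsto_atTop_add_const_left _ L
    (tendsto_sum_primesBelow_one_div_atTop.const_mul_atTop hε)

lemma tendsto_sum_primesBelow_div_of_isLittleO (hc : 0 < c)
    (hasymp : (fun x : ℝ ↦ (∑ p ∈ Nat.primesBelow (⌊x⌋₊ + 1), f p) - c * (x / Real.log x))
      =o[atTop] fun x : ℝ ↦ x / Real.log x) :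
    Tendsto (fun n ↦ ∑ p ∈ Nat.primesBelow n, f p / p) atTop atTop :=
  let ⟨_, hε, hnonneg⟩ := eventually_nonneg_sum_primesBelow_sub hc hasymp
  tendsto_sum_primesBelow_div_of_eventually_nonneg hε hnonneg

lemma sum_primesBelow_mul_rpow_neg_le {s : ℝ} (hs : 1 ≤ s) {m n : ℕ} (hm : m ≠ 0) (hmn : m ≤ n)
    (hmin : ∀ n ≥ m, ∑ p ∈ Nat.primesBelow m, f p / p ≤ ∑ p ∈ Nat.primesBelow n, f p / p) :
    ∑ p ∈ Nat.primesBelow m, f p * (p : ℝ) ^ (-s)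
      ≤ ∑ p ∈ Nat.primesBelow n, f p * (p : ℝ) ^ (-s) := by
  have hsplit (n : ℕ) : ∑ p ∈ Nat.primesBelow n, f p * (p : ℝ) ^ (-s)
      = ∑ p ∈ Nat.primesBelow n, f p / p * (p : ℝ) ^ (-(s - 1)) :=
    Finset.sum_congr rfl fun p hp ↦ by
      have hp0 : (p : ℝ) ≠ 0 := Nat.cast_ne_zero.2 (Nat.prime_of_mem_primesBelow hp).ne_zero
      rw [show -(s - 1) = -s + 1 by ring, Real.rpow_add_one hp0]
      field_simp
  rw [hsplit, hsplit, ← sub_nonneg]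
  simpa only [zero_mul] using le_sum_primesBelow_mul_sub_of_antitoneOn (L := 0)
    ((antitoneOn_natCast_rpow_neg (sub_nonneg.2 hs)).mono
      (Set.Ici_subset_Ici.2 (Nat.one_le_iff_ne_zero.2 hm)))
    (fun i _ ↦ by positivity) (fun n hn ↦ sub_nonneg.2 (hmin n hn)) hmn

lemma tendsto_sum_primesBelow_mul_rpow_neg (f : ℕ → ℝ) (n : ℕ) :
    Tendsto (fun s : ℝ ↦ ∑ p ∈ Nat.primesBelow n, f p * (p : ℝ) ^ (-s)) (nhds 1)
      (nhds (∑ p ∈ Nat.primesBelow n, f p / p)) := by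
  refine tendsto_finsetSum _ fun p hp ↦ ?_
  have hp0 : (p : ℝ) ≠ 0 := Nat.cast_ne_zero.2 (Nat.prime_of_mem_primesBelow hp).ne_zero
  rw [div_eq_mul_inv, ← Real.rpow_neg_one]
  exact ((Real.continuousAt_const_rpow hp0).tendsto.comp tendsto_id.neg).const_mul _

end PrimeSums

lemma exists_ge_forall_ge_le_of_tendsto_atTop {u : ℕ → ℝ} (hu : Tendsto u atTop atTop) (m : ℕ) :
    ∃ N ≥ m, ∀ n ≥ N, u N ≤ u n := by
  obtain ⟨j, hj⟩ := continuous_of_discreteTopology.exists_forall_le (f := fun j ↦ u (j + m))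
    (by simpa only [cocompact_eq_atTop] using (tendsto_add_atTop_iff_nat m).2 hu)
  refine ⟨j + m, m.le_add_left j, fun n hn ↦ ?_⟩
  simpa only [Nat.sub_add_cancel ((m.le_add_left j).trans hn)] using hj (n - m)

lemma exists_exp_sum_sub_le_tsum {f : ℕ → ℝ} (hf1 : f 1 = 1)
    (hfmul : ∀ a b : ℕ, a.Coprime b → f (a * b) = f a * f b) (hf : ∀ n ≠ 0, |f n| ≤ 1)
    (hf2 : ∃ k, 1 ≤ k ∧ f (2 ^ k) ≠ -1) :
    ∃ B : ℝ, ∀ N ≠ 0,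
      (∀ n ≥ N, ∑ p ∈ Nat.primesBelow N, f p / p ≤ ∑ p ∈ Nat.primesBelow n, f p / p) →
      ∀ s ∈ Set.Ioc (1 : ℝ) 2, Real.exp (∑ p ∈ Nat.primesBelow N, f p * (p : ℝ) ^ (-s) - B)
        ≤ ∑' n : ℕ, f n * (n : ℝ) ^ (-s) := by
  obtain ⟨B, hB⟩ := exists_exp_sum_sub_le_prod_eulerFactor hf1 hf hf2
  refine ⟨B, fun N hN hmin s hs ↦ ?_⟩
  refine ge_of_tendsto (tendsto_prod_primesBelow_tsum_mul_pow hf1 hfmul hf hs.1) ?_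
  filter_upwards [eventually_ge_atTop N] with n hn
  refine le_trans ?_ (hB s ⟨hs.1.le, hs.2⟩ n)
  gcongr Real.exp (?_ - B)
  exact sum_primesBelow_mul_rpow_neg_le hs.1.le hN hn hmin

theorem stmt_12_general (f : ℕ → ℝ) (hf1 : f 1 = 1)
    (hfmul : ∀ a b : ℕ, a.Coprime b → f (a * b) = f a * f b) (hf : ∀ n ≠ 0, |f n| ≤ 1)
    (hf2 : ∃ k, 1 ≤ k ∧ f (2 ^ k) ≠ -1)
    (hprimes : Tendsto (fun n ↦ ∑ p ∈ Nat.primesBelow n, f p / p) atTop atTop) (C : ℝ) :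
    ∃ N : ℕ, C < ∑ n ∈ Finset.Icc 1 N, f n := by
  by_contra! hC
  obtain ⟨B, hB⟩ := exists_exp_sum_sub_le_tsum hf1 hfmul hf hf2
  obtain ⟨m, hm⟩ := eventually_atTop.1 (hprimes.eventually_gt_atTop (C + B))
  -- As no later sum over the primes is below the one at `N`, Abel summation shows that the primes
  -- `p ≥ N` contribute a nonnegative amount to `∑ f(p) p⁻ˢ` for every `s ≥ 1`.
  obtain ⟨N, hN, hmin⟩ := exists_ge_forall_ge_le_of_tendsto_atTop hprimes (m + 1)
  have hlim : Tendsto (fun s : ℝ ↦ Real.exp (∑ p ∈ Nat.primesBelow N, f p * (p : ℝ) ^ (-s) - B))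
      (nhdsWithin 1 (Set.Ioi 1)) (nhds (Real.exp (∑ p ∈ Nat.primesBelow N, f p / p - B))) :=
    ((Real.continuous_exp.tendsto _).comp
      ((tendsto_sum_primesBelow_mul_rpow_neg f N).sub_const B)).mono_left nhdsWithin_le_nhds
  have hexp : Real.exp (∑ p ∈ Nat.primesBelow N, f p / p - B) ≤ C := by
    refine le_of_tendsto hlim ?_
    filter_upwards [Ioc_mem_nhdsGT one_lt_two] with s hs
    exact (hB N (by lia) hmin s hs).trans <| tsum_mul_rpow_neg_le hC (zero_lt_one.trans hs.1)
      (summable_norm_mul_rpow_neg hf hs.1).of_norm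
  linarith [hm N (by lia), Real.add_one_le_exp (∑ p ∈ Nat.primesBelow N, f p / p - B)]

/-- If `f` is multiplicative with values in `{-1, 1}`, `f (2^k) = 1` for some `k ≥ 1`,
`c ∈ (0, 1]`, and `∑_{p ≤ x} f p = c·(x/log x)·(1 + o(1))`, then the partial sums of
`f` are unbounded. -/
theorem stmt_12 (f : ℕ → ℤ)
    (hf1 : f 1 = 1)
    (hfmul : ∀ a b : ℕ, Nat.Coprime a b → f (a * b) = f a * f b)
    (hfpm : ∀ n : ℕ, 1 ≤ n → f n = 1 ∨ f n = -1)
    (hf2 : ∃ k : ℕ, 1 ≤ k ∧ f (2 ^ k) = 1)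
    (c : ℝ) (hc : c ∈ Set.Ioc (0 : ℝ) 1)
    (hasymp : (fun x : ℝ => (∑ p ∈ Nat.primesBelow (⌊x⌋₊ + 1), (f p : ℝ))
        - c * (x / Real.log x)) =o[atTop] (fun x : ℝ => x / Real.log x)) :
    ∀ C : ℝ, ∃ N : ℕ, C < |((∑ n ∈ Finset.Icc 1 N, f n : ℤ) : ℝ)| := by
  intro C
  have hf (n : ℕ) (hn : n ≠ 0) : |(f n : ℝ)| ≤ 1 := by
    rcases hfpm n (Nat.one_le_iff_ne_zero.2 hn) with h | h <;> simp [h]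
  have hf2' : ∃ k, 1 ≤ k ∧ (f (2 ^ k) : ℝ) ≠ -1 :=
    hf2.imp fun k ⟨hk, hfk⟩ ↦ ⟨hk, by norm_num [hfk]⟩
  obtain ⟨N, hN⟩ := stmt_12_general (fun n ↦ f n) (mod_cast hf1) (mod_cast hfmul) hf hf2'
    (tendsto_sum_primesBelow_div_of_isLittleO hc.1 hasymp) C
  exact ⟨N, (Int.cast_sum (R := ℝ) _ f ▸ hN).trans_le (le_abs_self _)⟩
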